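/- arXiv:1903.03068 — 2 statements merged into one kernel-verified Lean document; each statement's English description precedes it below -/
import Mathlib

section
/- Let P, Q be quaternionic polynomials with deg P ≤ deg Q, and suppose there exists an imaginary unit I ∈ ℍ (I² = −1) such that all coefficients of Q lie in the real subalgebra ℂ_I generated by 1 and I. If every left root of Q has norm ≤ 1, and |P(x)| ≤ |Q(x)| for all x ∈ ℍ with |x| = 1, then |P'(x)| ≤ |Q'(x)| for all x ∈ ℂ_I with |x| = 1. -/
/-!
Left multiplication by `ℂ_I` makes `ℍ` a complex normed space, in which `P` restricted to `ℂ_I` is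
a polynomial with vector coefficients, while `Q` restricted to `ℂ_I` is an ordinary complex
polynomial. Composing `P` with a functional of norm one that attains the norm of `P'(x)` reduces the
claim to two complex polynomials `R` and `Q`.

If the roots of `Q` lie in the open unit disc, the maximum principle, applied to `R / Q` on the
exterior of the disc including `∞`, gives `‖R‖ ≤ ‖Q‖` there. So for `‖c‖ > 1` the roots of `R - c Q`
lie in the open disc, hence by Gauss–Lucas so do those of `R' - c Q'`, that is, `‖R'‖ ≤ ‖Q'‖`
outside the disc. Roots of `Q` on the circle are handled by letting `r → 1⁺` in `Q(r z)`, which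
dominates `Q(z)` on the circle.
-/

open Filter Polynomial Topology
open scoped Quaternion

theorem norm_le_norm_of_forall_mem_frontier {E F : Type*} [NormedAddCommGroup E] [NormedSpace ℂ E]
    [Nontrivial E] [NormedAddCommGroup F] [NormedSpace ℂ F] {U : Set E} (hU : Bornology.IsBounded U)
    {f : E → F} {g : E → ℂ} (hf : DiffContOnCl ℂ f U) (hg : DiffContOnCl ℂ g U)
    (hg_ne : ∀ z ∈ closure U, g z ≠ 0) (hle : ∀ z ∈ frontier U, ‖f z‖ ≤ ‖g z‖)
    {z : E} (hz : z ∈ closure U) : ‖f z‖ ≤ ‖g z‖ := by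
  have norm_quotient_le_one {w : E} (hw : w ∈ closure U) :
      ‖(g⁻¹ • f) w‖ ≤ 1 ↔ ‖f w‖ ≤ ‖g w‖ := by
    rw [Pi.smul_apply', Pi.inv_apply, norm_smul, norm_inv,
      inv_mul_le_one₀ (norm_pos_iff.2 (hg_ne w hw))]
  rw [← norm_quotient_le_one hz]
  refine Complex.norm_le_of_forall_mem_frontier_norm_le hU ((hg.inv hg_ne).smul hf)
    (fun w hw ↦ ?_) hz
  exact (norm_quotient_le_one (frontier_subset_closure hw)).2 (hle w hw)

theorem eval_reflect_inv_mul_pow {K : Type*} [Field K] {p : K[X]} {n : ℕ} (hp : p.natDegree ≤ n)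
    {x : K} (hx : x ≠ 0) : (p.reflect n).eval x⁻¹ * x ^ n = p.eval x := by
  let := invertibleOfNonzero hx
  simpa only [invOf_eq_inv, eval₂_id] using eval₂_reflect_mul_pow (RingHom.id K) x n p hp

theorem eval_zero_reflect {K : Type*} [Semiring K] (p : K[X]) (n : ℕ) :
    (p.reflect n).eval 0 = p.coeff n := by
  rw [← coeff_zero_eq_eval_zero, coeff_reflect, revAt_zero]

theorem eval_reverse_ne_zero {K : Type*} [NormedField K] {p : K[X]}
    (hroots : ∀ z, p.eval z = 0 → ‖z‖ < 1) {w : K} (hw : ‖w‖ ≤ 1) : p.reverse.eval w ≠ 0 := by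
  have hp : p ≠ 0 := by
    rintro rfl
    simpa using hroots 1 eval_zero
  rcases eq_or_ne w 0 with rfl | hw₀
  · rwa [reverse, eval_zero_reflect, coeff_natDegree, leadingCoeff_ne_zero]
  · intro h
    have root_inv : p.eval w⁻¹ = 0 := by
      rw [← eval_reflect_inv_mul_pow le_rfl (inv_ne_zero hw₀), inv_inv, ← reverse, h, zero_mul]
    have := hroots _ root_inv
    rw [norm_inv, inv_lt_one₀ (norm_pos_iff.2 hw₀)] at this
    exact this.not_ge hw

section Exterior

variable {p q : ℂ[X]}

theorem norm_eval_reflect_le_norm_eval_reverse (hdeg : p.natDegree ≤ q.natDegree)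
    (hroots : ∀ z, q.eval z = 0 → ‖z‖ < 1) (hle : ∀ z, ‖z‖ = 1 → ‖p.eval z‖ ≤ ‖q.eval z‖)
    {w : ℂ} (hw : ‖w‖ ≤ 1) :
    ‖(p.reflect q.natDegree).eval w‖ ≤ ‖q.reverse.eval w‖ := by
  have mem_closure_ball {z : ℂ} : z ∈ closure (Metric.ball (0 : ℂ) 1) ↔ ‖z‖ ≤ 1 := by
    rw [closure_ball _ one_ne_zero, mem_closedBall_zero_iff]
  refine norm_le_norm_of_forall_mem_frontier Metric.isBounded_ball
    (Polynomial.differentiable _).diffContOnCl (Polynomial.differentiable _).diffContOnCl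
    (fun z hz ↦ eval_reverse_ne_zero hroots (mem_closure_ball.1 hz)) (fun z hz ↦ ?_)
    (mem_closure_ball.2 hw)
  rw [frontier_ball _ one_ne_zero, mem_sphere_zero_iff_norm] at hz
  have hz₀ : z⁻¹ ≠ 0 := inv_ne_zero (norm_ne_zero_iff.1 (hz ▸ one_ne_zero))
  have hz_inv : ‖z⁻¹‖ = 1 := by rw [norm_inv, hz, inv_one]
  simpa only [← eval_reflect_inv_mul_pow hdeg hz₀, ← eval_reflect_inv_mul_pow le_rfl hz₀,
    reverse, inv_inv, norm_mul, norm_pow, hz_inv, one_pow, mul_one] using hle z⁻¹ hz_inv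

theorem norm_eval_le_of_one_le_norm (hdeg : p.natDegree ≤ q.natDegree)
    (hroots : ∀ z, q.eval z = 0 → ‖z‖ < 1) (hle : ∀ z, ‖z‖ = 1 → ‖p.eval z‖ ≤ ‖q.eval z‖)
    {z : ℂ} (hz : 1 ≤ ‖z‖) : ‖p.eval z‖ ≤ ‖q.eval z‖ := by
  have hz₀ : z ≠ 0 := norm_pos_iff.1 (one_pos.trans_le hz)
  rw [← eval_reflect_inv_mul_pow hdeg hz₀, ← eval_reflect_inv_mul_pow le_rfl hz₀, norm_mul,
    norm_mul]
  gcongr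
  exact norm_eval_reflect_le_norm_eval_reverse hdeg hroots hle
    (norm_inv z ▸ inv_le_one_of_one_le₀ hz)

theorem norm_coeff_natDegree_le (hdeg : p.natDegree ≤ q.natDegree)
    (hroots : ∀ z, q.eval z = 0 → ‖z‖ < 1) (hle : ∀ z, ‖z‖ = 1 → ‖p.eval z‖ ≤ ‖q.eval z‖) :
    ‖p.coeff q.natDegree‖ ≤ ‖q.coeff q.natDegree‖ := by
  simpa only [reverse, eval_zero_reflect] using
    norm_eval_reflect_le_norm_eval_reverse hdeg hroots hle (w := 0) (by simp)

end Exterior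

theorem mem_of_eval_derivative_eq_zero_of_convex {p : ℂ[X]} (hp : 0 < p.natDegree)
    {s : Set ℂ} (hs : Convex ℝ s) (hroots : ∀ z, p.eval z = 0 → z ∈ s) {z : ℂ}
    (hz : p.derivative.eval z = 0) : z ∈ s := by
  have hp' : p.derivative ≠ 0 := mt derivative_eq_zero.1 hp.ne'
  refine convexHull_min (fun w hw ↦ hroots w ?_) hs
    (rootSet_derivative_subset_convexHull_rootSet (natDegree_pos_iff_degree_pos.1 hp)
      (mem_rootSet.2 ⟨hp', by simpa using hz⟩))
  simpa using (mem_rootSet.1 hw).2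

theorem eval_derivative_ne_zero {p : ℂ[X]} (hp : 0 < p.natDegree)
    (hroots : ∀ z, p.eval z = 0 → ‖z‖ < 1) {z : ℂ} (hz : 1 ≤ ‖z‖) : p.derivative.eval z ≠ 0 := by
  intro h
  have : z ∈ Metric.ball 0 1 := mem_of_eval_derivative_eq_zero_of_convex hp (convex_ball 0 1)
    (fun w hw ↦ mem_ball_zero_iff.2 (hroots w hw)) h
  exact (mem_ball_zero_iff.1 this).not_ge hz

theorem ne_mul_of_norm_le_of_one_lt_norm {K : Type*} [NormedField K] {u v c : K} (hv : v ≠ 0)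
    (h : ‖u‖ ≤ ‖v‖) (hc : 1 < ‖c‖) : u ≠ c * v := by
  rintro rfl
  rw [norm_mul] at h
  exact h.not_gt (lt_mul_of_one_lt_left (norm_pos_iff.2 hv) hc)

theorem norm_eval_derivative_le_of_roots_norm_lt_one {p q : ℂ[X]}
    (hdeg : p.natDegree ≤ q.natDegree) (hroots : ∀ z, q.eval z = 0 → ‖z‖ < 1)
    (hle : ∀ z, ‖z‖ = 1 → ‖p.eval z‖ ≤ ‖q.eval z‖) {z : ℂ} (hz : 1 ≤ ‖z‖) :
    ‖p.derivative.eval z‖ ≤ ‖q.derivative.eval z‖ := by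
  rcases q.natDegree.eq_zero_or_pos with hq | hq
  · rw [derivative_of_natDegree_zero (Nat.eq_zero_of_le_zero (hdeg.trans_eq hq))]
    simp
  have hq' : q.derivative.eval z ≠ 0 := eval_derivative_ne_zero hq hroots hz
  by_contra! hlt
  set c := p.derivative.eval z / q.derivative.eval z with hc_def
  have hc : 1 < ‖c‖ := by rwa [hc_def, norm_div, one_lt_div (norm_pos_iff.2 hq')]
  have natDegree_pos : 0 < (p - C c * q).natDegree := by
    refine hq.trans_le (le_natDegree_of_ne_zero ?_)
    rw [coeff_sub, coeff_C_mul, sub_ne_zero]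
    exact ne_mul_of_norm_le_of_one_lt_norm (leadingCoeff_ne_zero.2 (ne_zero_of_natDegree_gt hq))
      (norm_coeff_natDegree_le hdeg hroots hle) hc
  have roots_norm_lt_one (w : ℂ) (hw : (p - C c * q).eval w = 0) : ‖w‖ < 1 := by
    by_contra! hw₁
    rw [eval_sub, eval_mul, eval_C, sub_eq_zero] at hw
    exact ne_mul_of_norm_le_of_one_lt_norm (fun h ↦ (hroots w h).not_ge hw₁)
      (norm_eval_le_of_one_le_norm hdeg hroots hle hw₁) hc hw
  refine eval_derivative_ne_zero natDegree_pos roots_norm_lt_one hz ?_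
  rw [derivative_sub, derivative_C_mul, eval_sub, eval_mul, eval_C, hc_def,
    div_mul_cancel₀ _ hq', sub_self]

theorem norm_sub_le_norm_smul_sub {E : Type*} [NormedAddCommGroup E] [InnerProductSpace ℝ E]
    {x y : E} (h : ‖y‖ ≤ ‖x‖) {r : ℝ} (hr : 1 ≤ r) : ‖x - y‖ ≤ ‖r • x - y‖ := by
  have inner_le : inner ℝ x y ≤ ‖x‖ ^ 2 := by
    nlinarith [real_inner_le_norm x y, norm_nonneg x]
  rw [← sq_le_sq₀ (norm_nonneg _) (norm_nonneg _), norm_sub_sq_real, norm_sub_sq_real,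
    real_inner_smul_left, norm_smul, mul_pow, Real.norm_eq_abs, sq_abs]
  nlinarith [mul_nonneg (sub_nonneg.2 hr) (sub_nonneg.2 inner_le),
    mul_nonneg (mul_nonneg (sub_nonneg.2 hr) (sub_nonneg.2 hr)) (sq_nonneg ‖x‖)]

theorem norm_eval_le_norm_eval_mul {p : ℂ[X]} {z : ℂ} (hroots : ∀ w, p.eval w = 0 → ‖w‖ ≤ ‖z‖)
    {r : ℝ} (hr : 1 ≤ r) : ‖p.eval z‖ ≤ ‖p.eval (r * z)‖ := by
  rcases eq_or_ne p 0 with rfl | hp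
  · simp
  have norm_eval (w : ℂ) :
      ‖p.eval w‖ = ‖p.leadingCoeff‖ * (p.roots.map fun u ↦ ‖w - u‖).prod := by
    rw [(IsAlgClosed.splits p).eval_eq_prod_roots, norm_mul]
    congr 1
    simpa only [normHom_apply, Multiset.map_map, Function.comp_apply] using
      map_multiset_prod normHom (p.roots.map (w - ·))
  rw [norm_eval, norm_eval]
  gcongr
  refine Multiset.prod_map_le_prod_map₀ _ _ (fun _ _ ↦ norm_nonneg _) fun u hu ↦ ?_
  rw [← Complex.real_smul]
  exact norm_sub_le_norm_smul_sub (hroots u (mem_roots hp |>.1 hu)) hr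

theorem norm_eval_derivative_le {p q : ℂ[X]} (hdeg : p.natDegree ≤ q.natDegree)
    (hroots : ∀ z, q.eval z = 0 → ‖z‖ ≤ 1) (hle : ∀ z, ‖z‖ = 1 → ‖p.eval z‖ ≤ ‖q.eval z‖)
    {z : ℂ} (hz : 1 ≤ ‖z‖) : ‖p.derivative.eval z‖ ≤ ‖q.derivative.eval z‖ := by
  have le_dilation {r : ℝ} (hr : 1 < r) :
      ‖p.derivative.eval z‖ ≤ ‖r * q.derivative.eval (r * z)‖ := by
    have hr₀ : (r : ℂ) ≠ 0 := by exact_mod_cast (one_pos.trans hr).ne'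
    have norm_dilation (w : ℂ) : ‖r * w‖ = r * ‖w‖ := by
      rw [norm_mul, Complex.norm_of_nonneg (one_pos.trans hr).le]
    have natDegree_dilation : (q.comp (C (r : ℂ) * X)).natDegree = q.natDegree := by
      rw [natDegree_comp, natDegree_C_mul_X _ hr₀, mul_one]
    have h := norm_eval_derivative_le_of_roots_norm_lt_one (p := p) (q := q.comp (C (r : ℂ) * X))
      (by rwa [natDegree_dilation]) (fun w hw ↦ ?_) (fun w hw ↦ ?_) hz
    · simpa [derivative_comp] using h
    · have := hroots (r * w) (by simpa using hw)
      rw [norm_dilation] at this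
      nlinarith [norm_nonneg w]
    · have := norm_eval_le_norm_eval_mul (fun u hu ↦ (hroots u hu).trans_eq hw.symm) hr.le
      simpa using (hle w hw).trans this
  have tendsto_dilation : Tendsto (fun r : ℝ ↦ ‖r * q.derivative.eval (r * z)‖) (𝓝[>] 1)
      (𝓝 ‖q.derivative.eval z‖) := by
    have : Continuous fun r : ℝ ↦ ‖r * q.derivative.eval (r * z)‖ := by fun_prop
    simpa using (this.tendsto 1).mono_left nhdsWithin_le_nhds
  exact ge_of_tendsto tendsto_dilation (eventually_mem_nhdsWithin.mono fun r hr ↦ le_dilation hr)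

theorem eval_trunc_mk {R : Type*} [CommSemiring R] (c : ℕ → R) (n : ℕ) (x : R) :
    ((PowerSeries.mk c).trunc n).eval x = ∑ k ∈ Finset.range n, x ^ k * c k := by
  simp only [← eval₂_id, PowerSeries.eval₂_trunc_eq_sum_range, PowerSeries.coeff_mk,
    RingHom.id_apply, mul_comm]

theorem eval_derivative_trunc_mk {R : Type*} [CommSemiring R] (c : ℕ → R) (n : ℕ) (x : R) :
    (derivative ((PowerSeries.mk c).trunc (n + 1))).eval x =
      ∑ k ∈ Finset.range n, x ^ k * ((k + 1 : ℕ) * c (k + 1)) := by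
  have derivative_mk : PowerSeries.derivative R (PowerSeries.mk c) =
      PowerSeries.mk fun k ↦ (k + 1 : ℕ) * c (k + 1) := by
    ext k
    simp [PowerSeries.coeff_derivative, mul_comm]
  rw [← PowerSeries.trunc_derivative, derivative_mk, eval_trunc_mk]

theorem natDegree_trunc_succ_le {R : Type*} [Semiring R] (f : PowerSeries R) (n : ℕ) :
    (f.trunc (n + 1)).natDegree ≤ n :=
  Nat.le_of_lt_succ (PowerSeries.natDegree_trunc_lt f n)

theorem natDegree_trunc_mk {R : Type*} [Semiring R] {c : ℕ → R} {n : ℕ} (hc : c n ≠ 0) :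
    ((PowerSeries.mk c).trunc (n + 1)).natDegree = n := by
  refine natDegree_eq_of_le_of_coeff_ne_zero (natDegree_trunc_succ_le _ n) ?_
  rwa [PowerSeries.coeff_trunc, if_pos n.lt_succ_self, PowerSeries.coeff_mk]

theorem norm_sum_derivative_le {E : Type*} [NormedAddCommGroup E] [NormedSpace ℂ E] {q : ℂ[X]}
    {n : ℕ} (hdeg : n ≤ q.natDegree) (a : ℕ → E) (hroots : ∀ z, q.eval z = 0 → ‖z‖ ≤ 1)
    (hle : ∀ z : ℂ, ‖z‖ = 1 → ‖∑ k ∈ Finset.range (n + 1), z ^ k • a k‖ ≤ ‖q.eval z‖)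
    {z : ℂ} (hz : 1 ≤ ‖z‖) :
    ‖∑ k ∈ Finset.range n, z ^ k • ((k + 1 : ℕ) : ℂ) • a (k + 1)‖ ≤ ‖q.derivative.eval z‖ := by
  obtain ⟨L, hL, hL_eq⟩ := exists_dual_vector'' ℂ
    (∑ k ∈ Finset.range n, z ^ k • ((k + 1 : ℕ) : ℂ) • a (k + 1))
  set p : ℂ[X] := (PowerSeries.mk fun k ↦ L (a k)).trunc (n + 1) with hp
  have eval_p (w : ℂ) : p.eval w = L (∑ k ∈ Finset.range (n + 1), w ^ k • a k) := by
    simp only [hp, eval_trunc_mk, map_sum, map_smul, smul_eq_mul]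
  have eval_derivative_p : p.derivative.eval z =
      L (∑ k ∈ Finset.range n, z ^ k • ((k + 1 : ℕ) : ℂ) • a (k + 1)) := by
    simp only [hp, eval_derivative_trunc_mk, map_sum, map_smul, smul_eq_mul]
  have norm_p_le (w : ℂ) (hw : ‖w‖ = 1) : ‖p.eval w‖ ≤ ‖q.eval w‖ := by
    rw [eval_p]
    exact (L.le_of_opNorm_le hL _).trans ((one_mul _).trans_le (hle w hw))
  calc ‖∑ k ∈ Finset.range n, z ^ k • ((k + 1 : ℕ) : ℂ) • a (k + 1)‖
      = ‖p.derivative.eval z‖ := by rw [eval_derivative_p, hL_eq, RCLike.norm_ofReal, abs_norm]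
    _ ≤ ‖q.derivative.eval z‖ :=
      norm_eval_derivative_le ((natDegree_trunc_succ_le _ n).trans hdeg) hroots norm_p_le hz

theorem star_eq_neg_of_sq_eq_neg_one {I : ℍ[ℝ]} (hI : I ^ 2 = -1) : star I = -I := by
  have norm_I : ‖I‖ = 1 := by
    rw [← sq_eq_sq₀ (norm_nonneg _) zero_le_one, ← norm_pow, hI, norm_neg, norm_one, one_pow]
  rw [Quaternion.star_eq_neg, ← Quaternion.sq_eq_neg_normSq, hI,
    Quaternion.normSq_eq_norm_mul_self, norm_I, mul_one, Quaternion.coe_one]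

section Slice

variable {I : ℍ[ℝ]} (hI : I ^ 2 = -1)

/-- The isomorphism of `ℂ` onto the slice `ℂ_I` sending the imaginary unit of `ℂ` to `I`, as an
embedding of `ℂ` into `ℍ`. -/
noncomputable def sliceEmbedding : ℂ →ₐ[ℝ] ℍ[ℝ] :=
  Complex.lift ⟨I, by rw [← sq, hI]⟩

theorem sliceEmbedding_apply (z : ℂ) : sliceEmbedding hI z = z.re • 1 + z.im • I := by
  simp [sliceEmbedding, Complex.liftAux_apply, Algebra.algebraMap_eq_smul_one]

theorem mem_span_iff_mem_range_sliceEmbedding {x : ℍ[ℝ]} :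
    x ∈ Submodule.span ℝ ({1, I} : Set ℍ[ℝ]) ↔ x ∈ Set.range (sliceEmbedding hI) := by
  simp only [Submodule.mem_span_pair, Set.mem_range, sliceEmbedding_apply]
  exact ⟨fun ⟨s, t, h⟩ ↦ ⟨⟨s, t⟩, h⟩, fun ⟨z, h⟩ ↦ ⟨z.re, z.im, h⟩⟩

theorem norm_sliceEmbedding (z : ℂ) : ‖sliceEmbedding hI z‖ = ‖z‖ := by
  have star_mul_self : star (sliceEmbedding hI z) * sliceEmbedding hI z =
      algebraMap ℝ ℍ[ℝ] (‖z‖ ^ 2) := by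
    have star_eq : star (sliceEmbedding hI z) = sliceEmbedding hI (star z) := by
      simp [sliceEmbedding_apply, star_eq_neg_of_sq_eq_neg_one hI]
    rw [star_eq, ← map_mul, ← AlgHom.commutes (sliceEmbedding hI), Complex.coe_algebraMap]
    congr 1
    simpa using Complex.conj_mul' z
  rw [← sq_eq_sq₀ (norm_nonneg _) (norm_nonneg _), sq, ← CStarRing.norm_star_mul_self,
    star_mul_self, norm_algebraMap', Real.norm_of_nonneg (sq_nonneg _)]

/-- The complex normed space structure on `ℍ` for which `z • x` is the product `z x` with `z`
viewed in the slice `ℂ_I`. -/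
noncomputable abbrev sliceNormedSpace : NormedSpace ℂ ℍ[ℝ] where
  __ := Module.compHom ℍ[ℝ] (sliceEmbedding hI).toRingHom
  norm_smul_le z x := (norm_mul (sliceEmbedding hI z) x).trans_le (by rw [norm_sliceEmbedding])

end Slice

theorem quaternionic_bernstein_comparison_general
    (dP dQ : ℕ) (hdeg : dP ≤ dQ) (a b : ℕ → ℍ[ℝ]) (hbQ : b dQ ≠ 0) (I : ℍ[ℝ]) (hI : I ^ 2 = -1)
    (hb : ∀ k, b k ∈ Submodule.span ℝ ({1, I} : Set ℍ[ℝ]))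
    (hroots : ∀ x ∈ Submodule.span ℝ ({1, I} : Set ℍ[ℝ]),
      ∑ k ∈ Finset.range (dQ + 1), x ^ k * b k = 0 → ‖x‖ ≤ 1)
    (hPQ : ∀ x ∈ Submodule.span ℝ ({1, I} : Set ℍ[ℝ]), ‖x‖ = 1 →
      ‖∑ k ∈ Finset.range (dP + 1), x ^ k * a k‖ ≤ ‖∑ k ∈ Finset.range (dQ + 1), x ^ k * b k‖)
    (x : ℍ[ℝ]) (hx : x ∈ Submodule.span ℝ ({1, I} : Set ℍ[ℝ])) (hx₁ : 1 ≤ ‖x‖) :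
    ‖∑ k ∈ Finset.range dP, x ^ k * (((k + 1 : ℕ) : ℍ[ℝ]) * a (k + 1))‖ ≤
      ‖∑ k ∈ Finset.range dQ, x ^ k * (((k + 1 : ℕ) : ℍ[ℝ]) * b (k + 1))‖ := by
  let := sliceNormedSpace hI
  have smul_def (z : ℂ) (y : ℍ[ℝ]) : z • y = sliceEmbedding hI z * y := rfl
  simp only [mem_span_iff_mem_range_sliceEmbedding hI, Set.forall_mem_range] at hb hroots hPQ hx
  obtain ⟨z, rfl⟩ := hx
  choose β hβ using hb
  obtain rfl : (fun k ↦ sliceEmbedding hI (β k)) = b := funext hβ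
  set q : ℂ[X] := (PowerSeries.mk β).trunc (dQ + 1) with hq
  have natDegree_q : q.natDegree = dQ := natDegree_trunc_mk ((_root_.map_ne_zero _).1 hbQ)
  have eval_q (w : ℂ) :
      ∑ k ∈ Finset.range (dQ + 1), sliceEmbedding hI w ^ k * sliceEmbedding hI (β k) =
        sliceEmbedding hI (q.eval w) := by
    simp only [hq, eval_trunc_mk, map_sum, map_mul, map_pow]
  have eval_derivative_q :
      ∑ k ∈ Finset.range dQ,
          sliceEmbedding hI z ^ k * (((k + 1 : ℕ) : ℍ[ℝ]) * sliceEmbedding hI (β (k + 1))) =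
        sliceEmbedding hI (q.derivative.eval z) := by
    simp only [hq, eval_derivative_trunc_mk, map_sum, map_mul, map_pow, map_natCast]
  simp only [eval_q, norm_sliceEmbedding, map_eq_zero] at hroots hPQ hx₁
  rw [eval_derivative_q, norm_sliceEmbedding]
  simpa only [smul_def, map_pow, map_natCast] using
    norm_sum_derivative_le (hdeg.trans_eq natDegree_q.symm) a hroots
      (by simpa only [smul_def, map_pow] using hPQ) hx₁

/-- **Quaternionic Bernstein comparison theorem.**
Let `P(X) = Σ_{k=0}^{dP} X^k a_k` and `Q(X) = Σ_{k=0}^{dQ} X^k b_k` be quaternionic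
polynomials (right coefficients) with `deg P ≤ deg Q`.  Suppose there is an imaginary
unit `I` (`I² = -1`) such that all coefficients of `Q` lie in `ℂ_I = span_ℝ {1, I}`.
If every left root of `Q` has norm at most `1` and `‖P(x)‖ ≤ ‖Q(x)‖` for all `x` with
`‖x‖ = 1`, then `‖P'(x)‖ ≤ ‖Q'(x)‖` for every `x ∈ ℂ_I` with `‖x‖ = 1`. -/
theorem quaternionic_bernstein_comparison
    (dP dQ : ℕ) (hdeg : dP ≤ dQ)
    (a b : ℕ → Quaternion ℝ) (haP : a dP ≠ 0) (hbQ : b dQ ≠ 0)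
    (I : Quaternion ℝ) (hI : I ^ 2 = -1)
    (hb : ∀ k, b k ∈ Submodule.span ℝ ({1, I} : Set (Quaternion ℝ)))
    (hroots : ∀ x : Quaternion ℝ, (∑ k ∈ Finset.range (dQ + 1), x ^ k * b k) = 0 → ‖x‖ ≤ 1)
    (hPQ : ∀ x : Quaternion ℝ, ‖x‖ = 1 →
      ‖∑ k ∈ Finset.range (dP + 1), x ^ k * a k‖ ≤ ‖∑ k ∈ Finset.range (dQ + 1), x ^ k * b k‖) :
    ∀ x : Quaternion ℝ, x ∈ Submodule.span ℝ ({1, I} : Set (Quaternion ℝ)) → ‖x‖ = 1 →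
      ‖∑ k ∈ Finset.range dP, x ^ k * (((k + 1 : ℕ) : Quaternion ℝ) * a (k + 1))‖ ≤
      ‖∑ k ∈ Finset.range dQ, x ^ k * (((k + 1 : ℕ) : Quaternion ℝ) * b (k + 1))‖ := fun x hx hx₁ ↦
  quaternionic_bernstein_comparison_general dP dQ hdeg a b hbQ I hI hb (fun y _ ↦ hroots y)
    (fun y _ ↦ hPQ y) x hx hx₁.ge
end

section
/- Let P(X) = Σ_{k=0}^d X^k c_k be a quaternionic polynomial. Define A(x) = Σ_{k=0}^d Z̃_k(x) c_k and B(x) = Σ_{k=0}^{d-1} Z̃_k(x) c_{k+1}, where Z̃_k are the real-valued zonal harmonics with Z̃_{-1}=0, Z̃_0=1, Z̃_k(x) = 2Re(x) Z̃_{k-1}(x) − |x|² Z̃_{k-2}(x). Then P(x) = A(x) − x̄ B(x) for every x ∈ ℍ, and the real components of A and B are harmonic functions on ℝ⁴. -/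
/-- `zonal (k+1) = Z̃_k`, with `zonal 0 = Z̃_{-1} = 0`, `zonal 1 = Z̃_0 = 1`, and
`Z̃_k(x) = 2 Re(x) Z̃_{k-1}(x) − |x|² Z̃_{k-2}(x)`. -/
noncomputable def zonal : ℕ → Quaternion ℝ → ℝ
  | 0, _ => 0
  | 1, _ => 1
  | (k + 2), x => 2 * x.re * zonal (k + 1) x - ‖x‖ ^ 2 * zonal k x

/-- Componentwise Laplacian of an `ℍ`-valued function of four real variables. -/
noncomputable def quatLaplacianH (f : Quaternion ℝ → Quaternion ℝ) (x : Quaternion ℝ) :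
    Quaternion ℝ :=
  iteratedFDeriv ℝ 2 f x ![1, 1] +
  iteratedFDeriv ℝ 2 f x ![⟨0,1,0,0⟩, ⟨0,1,0,0⟩] +
  iteratedFDeriv ℝ 2 f x ![⟨0,0,1,0⟩, ⟨0,0,1,0⟩] +
  iteratedFDeriv ℝ 2 f x ![⟨0,0,0,1⟩, ⟨0,0,0,1⟩]

/-!
The identity `x ^ k = Z̃_k(x) - x̄ Z̃_{k-1}(x)` follows by induction on `k` from `x + x̄ = 2 Re x`
and `x x̄ = |x|²`; multiplying by `c_k` on the right and summing gives the decomposition.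

For harmonicity, apply the Laplacian to the recursion. The Leibniz rules for products with `Re x`
and `|x|²` turn it into the same recursion for `Δ Z̃_k` with the extra term
`4 ∂₁ Z̃_{k-1} - 4 x·∇Z̃_{k-2} - 8 Z̃_{k-2}`, where `∂₁` is the derivative in the real direction.
It vanishes, because `∂₁ Z̃_{k-1} = k Z̃_{k-2}` and, by homogeneity,
`x·∇Z̃_{k-2} = (k - 2) Z̃_{k-2}`; the dimension enters through `8 = Δ|x|²`.
-/

open InnerProductSpace
open scoped Gradient Laplacian Quaternion

theorem iteratedFDeriv_two_fun_smul_diag {E F : Type*} [NormedAddCommGroup E] [NormedSpace ℝ E]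
    [NormedAddCommGroup F] [NormedSpace ℝ F] {f : E → ℝ} {g : E → F} {x : E}
    (hf : ContDiffAt ℝ 2 f x) (hg : ContDiffAt ℝ 2 g x) (v : E) :
    iteratedFDeriv ℝ 2 (fun y ↦ f y • g y) x ![v, v] =
      f x • iteratedFDeriv ℝ 2 g x ![v, v] + (2 * fderiv ℝ f x v) • fderiv ℝ g x v +
        iteratedFDeriv ℝ 2 f x ![v, v] • g x := by
  have fderiv_eq : fderiv ℝ (fun y ↦ f y • g y) =ᶠ[nhds x]
      fun y ↦ f y • fderiv ℝ g y + (fderiv ℝ f y).smulRight (g y) := by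
    filter_upwards [hf.eventually (by simp), hg.eventually (by simp)] with y hfy hgy
    exact fderiv_fun_smul (hfy.differentiableAt two_ne_zero) (hgy.differentiableAt two_ne_zero)
  have hf' : HasFDerivAt f (fderiv ℝ f x) x := (hf.differentiableAt two_ne_zero).hasFDerivAt
  have hg' : HasFDerivAt g (fderiv ℝ g x) x := (hg.differentiableAt two_ne_zero).hasFDerivAt
  have hf'' : HasFDerivAt (fderiv ℝ f) (fderiv ℝ (fderiv ℝ f) x) x :=
    ((hf.fderiv_right (m := 1) le_rfl).differentiableAt one_ne_zero).hasFDerivAt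
  have hg'' : HasFDerivAt (fderiv ℝ g) (fderiv ℝ (fderiv ℝ g) x) x :=
    ((hg.fderiv_right (m := 1) le_rfl).differentiableAt one_ne_zero).hasFDerivAt
  have second_deriv := (hf'.smul hg'').add
    ((ContinuousLinearMap.smulRightL ℝ E F).isBoundedBilinearMap.hasFDerivAt
      (fderiv ℝ f x, g x) |>.comp x (hf''.prodMk hg'))
  simp only [iteratedFDeriv_two_apply]
  rw [fderiv_eq.fderiv_eq]
  refine (congrArg (fun L ↦ L v v) second_deriv.fderiv).trans ?_
  simp only [ContinuousLinearMap.smulRightL_apply_apply, add_apply, smul_apply,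
    ContinuousLinearMap.smulRight_apply, ContinuousLinearMap.comp_apply,
    ContinuousLinearMap.prod_apply, IsBoundedBilinearMap.deriv_apply, Matrix.cons_val_zero,
    Matrix.cons_val_one, Matrix.cons_val_fin_one]
  module

section Laplacian

variable {E F : Type*} [NormedAddCommGroup E] [InnerProductSpace ℝ E] [FiniteDimensional ℝ E]
  [NormedAddCommGroup F] [NormedSpace ℝ F] {g : E → F} {x : E}

/-- The mixed term `2 ⟨∇f, ∇g⟩` is written as the derivative of `g` along `∇f`, so that `g` can be
vector-valued. -/
theorem laplacian_fun_smul {f : E → ℝ} (hf : ContDiffAt ℝ 2 f x) (hg : ContDiffAt ℝ 2 g x) :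
    Δ (fun y ↦ f y • g y) x = f x • Δ g x + (2 : ℝ) • fderiv ℝ g x (∇ f x) + Δ f x • g x := by
  let b := stdOrthonormalBasis ℝ E
  have mixed_term : fderiv ℝ g x (∇ f x) = ∑ i, fderiv ℝ f x (b i) • fderiv ℝ g x (b i) := by
    conv_lhs => rw [← b.sum_repr' (∇ f x)]
    simp [inner_gradient_right]
  simp only [laplacian_eq_iteratedFDeriv_orthonormalBasis _ b,
    iteratedFDeriv_two_fun_smul_diag hf hg, Finset.sum_add_distrib, mixed_term, Finset.smul_sum,
    Finset.sum_smul, mul_smul]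

theorem laplacian_continuousLinearMap (l : E →L[ℝ] F) : Δ (l : E → F) = 0 := by
  have fderiv_eq : fderiv ℝ (l : E → F) = fun _ ↦ l := funext fun _ ↦ l.fderiv
  ext x
  simp [laplacian_eq_iteratedFDeriv_stdOrthonormalBasis, iteratedFDeriv_two_apply, fderiv_eq]

theorem laplacian_norm_sq : Δ (fun y : E ↦ ‖y‖ ^ 2) = fun _ ↦ 2 * (Module.finrank ℝ E : ℝ) := by
  ext x
  have second_deriv (v : E) : fderiv ℝ (fderiv ℝ fun y : E ↦ ‖y‖ ^ 2) x v v = 2 * ‖v‖ ^ 2 := by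
    let B : E →L[ℝ] E →L[ℝ] ℝ := innerSL ℝ
    have B_self : B v v = ‖v‖ ^ 2 := real_inner_self_eq_norm_sq v
    have hB : HasFDerivAt (2 • ⇑(innerSL ℝ)) (2 • B) x := B.hasFDerivAt.const_smul 2
    rw [fderiv_norm_sq, hB.fderiv]
    simp [B_self]
  simp [laplacian_eq_iteratedFDeriv_stdOrthonormalBasis, iteratedFDeriv_two_apply, second_deriv,
    mul_comm]

theorem laplacian_inner_smul (e : E) (hg : ContDiffAt ℝ 2 g x) :
    Δ (fun y ↦ inner ℝ e y • g y) x = inner ℝ e x • Δ g x + (2 : ℝ) • fderiv ℝ g x e := by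
  have gradient_inner : ∇ (innerSL ℝ e) x = e :=
    (hasGradientAt_iff_hasFDerivAt.2 (innerSL ℝ e).hasFDerivAt).gradient
  have leibniz := laplacian_fun_smul (innerSL ℝ e).contDiff.contDiffAt hg
  rwa [gradient_inner, laplacian_continuousLinearMap, Pi.zero_apply, zero_smul, add_zero]
    at leibniz

theorem laplacian_norm_sq_smul (hg : ContDiffAt ℝ 2 g x) :
    Δ (fun y ↦ ‖y‖ ^ 2 • g y) x =
      ‖x‖ ^ 2 • Δ g x + (4 : ℝ) • fderiv ℝ g x x + (2 * Module.finrank ℝ E : ℝ) • g x := by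
  have gradient_norm_sq : ∇ (fun y : E ↦ ‖y‖ ^ 2) x = (2 : ℝ) • x := by
    have toDual_two_smul : toDual ℝ E ((2 : ℝ) • x) = 2 • innerSL ℝ x := by
      ext y
      simp
    refine HasGradientAt.gradient (hasGradientAt_iff_hasFDerivAt.2 ?_)
    rw [toDual_two_smul]
    exact (hasStrictFDerivAt_norm_sq x).hasFDerivAt
  rw [laplacian_fun_smul (contDiff_norm_sq ℝ).contDiffAt hg, gradient_norm_sq, laplacian_norm_sq,
    map_smul, smul_smul]
  norm_num

theorem harmonicAt_sum_smul {ι : Type*} (s : Finset ι) {f : ι → E → ℝ} (c : ι → F)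
    (hf : ∀ i ∈ s, HarmonicAt (f i) x) : HarmonicAt (fun y ↦ ∑ i ∈ s, f i y • c i) x := by
  have sum_eq : (fun y ↦ ∑ i ∈ s, f i y • c i) =
      ∑ i ∈ s, ContinuousLinearMap.toSpanSingleton ℝ (c i) ∘ f i := by
    ext y
    simp
  rw [sum_eq]
  exact Finset.sum_induction _ (HarmonicAt · x) (fun _ _ ↦ HarmonicAt.add) (harmonicAt_const 0)
    fun i hi ↦ (hf i hi).comp_CLM _

end Laplacian

theorem quatLaplacianH_eq_laplacian (f : ℍ[ℝ] → ℍ[ℝ]) : quatLaplacianH f = Δ f := by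
  let b : OrthonormalBasis (Fin 4) ℝ ℍ[ℝ] := .ofRepr Quaternion.linearIsometryEquivTuple
  have basis_eq : ⇑b = ![1, ⟨0, 1, 0, 0⟩, ⟨0, 0, 1, 0⟩, ⟨0, 0, 0, 1⟩] := by
    ext1 i
    fin_cases i <;> ext <;> simp [b]
  rw [laplacian_eq_iteratedFDeriv_orthonormalBasis f b, basis_eq]
  ext1 x
  rw [Fin.sum_univ_four]
  rfl

theorem inner_one_left_eq_re (x : ℍ[ℝ]) : inner ℝ 1 x = x.re := by
  simp [Quaternion.inner_def]

/-- Written with inner products and `•` so that the Leibniz rules for `Δ` apply. -/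
theorem zonal_add_two (n : ℕ) (x : ℍ[ℝ]) :
    zonal (n + 2) x = 2 * (inner ℝ 1 x • zonal (n + 1) x) - ‖x‖ ^ 2 • zonal n x := by
  rw [zonal, inner_one_left_eq_re, smul_eq_mul, smul_eq_mul, mul_assoc]

theorem pow_eq_zonal_sub_star_mul (x : ℍ[ℝ]) (k : ℕ) :
    x ^ k = (zonal (k + 1) x : ℍ[ℝ]) - star x * (zonal k x : ℍ[ℝ]) := by
  induction k with
  | zero => simp [zonal]
  | succ k ih =>
    have self_eq : x = 2 * (x.re : ℍ[ℝ]) - star x := eq_sub_of_add_eq x.self_add_star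
    have self_mul_star : x * star x = (‖x‖ : ℍ[ℝ]) ^ 2 := by
      rw [Quaternion.self_mul_star, Quaternion.normSq_eq_norm_mul_self]
      push_cast
      rw [sq]
    calc x ^ (k + 1)
        = x * zonal (k + 1) x - x * star x * zonal k x := by rw [pow_succ', ih, mul_sub, mul_assoc]
      _ = (2 * x.re - star x) * zonal (k + 1) x - ‖x‖ ^ 2 * zonal k x := by
        rw [self_mul_star, ← self_eq]
      _ = zonal (k + 2) x - star x * zonal (k + 1) x := by
        rw [zonal, two_mul, two_mul]
        push_cast
        noncomm_ring

theorem contDiff_zonal {m : WithTop ℕ∞} (n : ℕ) : ContDiff ℝ m (zonal n) := by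
  induction n using Nat.twoStepInduction with
  | zero => exact contDiff_const
  | one => exact contDiff_const
  | more n ih₀ ih₁ =>
    rw [funext (zonal_add_two n)]
    exact (contDiff_const.mul ((contDiff_const.inner ℝ contDiff_id).smul ih₁)).sub
      ((contDiff_norm_sq ℝ).smul ih₀)

theorem fderiv_zonal_zero (x : ℍ[ℝ]) : fderiv ℝ (zonal 0) x = 0 :=
  fderiv_const_apply 0

theorem fderiv_zonal_one (x : ℍ[ℝ]) : fderiv ℝ (zonal 1) x = 0 :=
  fderiv_const_apply 1

theorem fderiv_zonal_add_two (n : ℕ) (x v : ℍ[ℝ]) :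
    fderiv ℝ (zonal (n + 2)) x v =
      2 * (v.re * zonal (n + 1) x + x.re * fderiv ℝ (zonal (n + 1)) x v) -
        (2 * inner ℝ x v * zonal n x + ‖x‖ ^ 2 * fderiv ℝ (zonal n) x v) := by
  have hasFDerivAt_zonal (k : ℕ) : HasFDerivAt (zonal k) (fderiv ℝ (zonal k) x) x :=
    ((contDiff_zonal k).differentiable one_ne_zero x).hasFDerivAt
  have recursion := (((innerSL ℝ 1).hasFDerivAt.smul (hasFDerivAt_zonal (n + 1))).const_mul 2).sub
    ((hasStrictFDerivAt_norm_sq x).hasFDerivAt.smul (hasFDerivAt_zonal n))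
  rw [funext (zonal_add_two n)]
  refine (congrArg (· v) recursion.fderiv).trans ?_
  simp only [coe_innerSL_apply, inner_one_left_eq_re, smul_add, sub_apply, add_apply, smul_apply,
    smul_eq_mul, ContinuousLinearMap.smulRight_apply, nsmul_eq_mul, Nat.cast_ofNat]
  ring

theorem fderiv_zonal_succ_apply_one (n : ℕ) (x : ℍ[ℝ]) :
    fderiv ℝ (zonal (n + 1)) x 1 = (n + 1) * zonal n x := by
  induction n using Nat.twoStepInduction with
  | zero => simp [zonal]
  | one =>
    rw [fderiv_zonal_add_two, fderiv_zonal_zero, fderiv_zonal_one]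
    norm_num [zonal]
  | more n ih₀ ih₁ =>
    rw [fderiv_zonal_add_two, ih₀, ih₁, real_inner_comm, inner_one_left_eq_re, Quaternion.re_one,
      zonal]
    push_cast
    ring

theorem fderiv_zonal_apply_self (n : ℕ) (x : ℍ[ℝ]) :
    fderiv ℝ (zonal n) x x = (n - 1) * zonal n x := by
  induction n using Nat.twoStepInduction with
  | zero => simp [zonal]
  | one => simp [fderiv_zonal_one]
  | more n ih₀ ih₁ =>
    rw [fderiv_zonal_add_two, ih₀, ih₁, real_inner_self_eq_norm_sq, zonal]
    push_cast
    ring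

theorem laplacian_zonal_add_two (n : ℕ) (x : ℍ[ℝ]) :
    Δ (zonal (n + 2)) x = 2 * x.re * Δ (zonal (n + 1)) x - ‖x‖ ^ 2 * Δ (zonal n) x := by
  have hre : ContDiff ℝ 2 fun y : ℍ[ℝ] ↦ inner ℝ 1 y • zonal (n + 1) y :=
    (contDiff_const.inner ℝ contDiff_id).smul (contDiff_zonal _)
  have hnorm : ContDiff ℝ 2 fun y : ℍ[ℝ] ↦ ‖y‖ ^ 2 • zonal n y :=
    (contDiff_norm_sq ℝ).smul (contDiff_zonal _)
  have hsmul : ContDiff ℝ 2 ((2 : ℝ) • fun y : ℍ[ℝ] ↦ inner ℝ 1 y • zonal (n + 1) y) :=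
    contDiff_const.smul hre
  have recursion : zonal (n + 2) =
      (2 : ℝ) • (fun y ↦ inner ℝ 1 y • zonal (n + 1) y) - fun y ↦ ‖y‖ ^ 2 • zonal n y :=
    funext (zonal_add_two n)
  rw [recursion, hsmul.contDiffAt.laplacian_sub hnorm.contDiffAt,
    laplacian_smul _ hre.contDiffAt, laplacian_inner_smul _ (contDiff_zonal _).contDiffAt,
    laplacian_norm_sq_smul (contDiff_zonal _).contDiffAt, Quaternion.finrank_eq_four,
    fderiv_zonal_succ_apply_one, fderiv_zonal_apply_self, inner_one_left_eq_re]
  simp only [smul_eq_mul]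
  push_cast
  ring

theorem laplacian_zonal (n : ℕ) : Δ (zonal n) = 0 := by
  induction n using Nat.twoStepInduction with
  | zero => exact laplacian_const
  | one => exact laplacian_const
  | more n ih₀ ih₁ =>
    ext x
    simp [laplacian_zonal_add_two, ih₀, ih₁]

theorem harmonicAt_zonal (n : ℕ) (x : ℍ[ℝ]) : HarmonicAt (zonal n) x :=
  ⟨(contDiff_zonal n).contDiffAt, by rw [laplacian_zonal]⟩

theorem quatLaplacianH_sum_zonal_mul (m : ℕ) (c : ℕ → ℍ[ℝ]) (x : ℍ[ℝ]) :
    quatLaplacianH (fun y ↦ ∑ k ∈ Finset.range m, (zonal (k + 1) y : ℍ[ℝ]) * c k) x = 0 := by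
  simp only [quatLaplacianH_eq_laplacian, Quaternion.coe_mul_eq_smul]
  exact (harmonicAt_sum_smul (Finset.range m) c fun k _ ↦ harmonicAt_zonal (k + 1) x).2.eq_of_nhds

/-- **Almansi type decomposition.**  For `P(X) = Σ_{k=0}^d X^k c_k`, setting
`A(x) = Σ_{k=0}^d Z̃_k(x) c_k` and `B(x) = Σ_{k=0}^{d-1} Z̃_k(x) c_{k+1}`, one has
`P(x) = A(x) − x̄ B(x)` for all `x`, and `A`, `B` have harmonic (real) components. -/
theorem almansi_decomposition (d : ℕ) (c : ℕ → Quaternion ℝ) :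
    (∀ x : Quaternion ℝ,
      (∑ k ∈ Finset.range (d + 1), x ^ k * c k) =
        (∑ k ∈ Finset.range (d + 1), ((zonal (k + 1) x : ℝ) : Quaternion ℝ) * c k) -
          star x * (∑ k ∈ Finset.range d, ((zonal (k + 1) x : ℝ) : Quaternion ℝ) * c (k + 1))) ∧
    (∀ x : Quaternion ℝ,
      quatLaplacianH
        (fun y => ∑ k ∈ Finset.range (d + 1), ((zonal (k + 1) y : ℝ) : Quaternion ℝ) * c k) x
        = 0) ∧
    (∀ x : Quaternion ℝ,
      quatLaplacianH
        (fun y => ∑ k ∈ Finset.range d, ((zonal (k + 1) y : ℝ) : Quaternion ℝ) * c (k + 1)) x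
        = 0) := by
  refine ⟨fun x ↦ ?_, quatLaplacianH_sum_zonal_mul (d + 1) c,
    quatLaplacianH_sum_zonal_mul d fun k ↦ c (k + 1)⟩
  have pow_mul (k : ℕ) : x ^ k * c k = zonal (k + 1) x * c k - star x * (zonal k x * c k) := by
    rw [pow_eq_zonal_sub_star_mul, sub_mul, mul_assoc]
  have zonal_zero_mul : (zonal 0 x : Quaternion ℝ) * c 0 = 0 := by simp [zonal]
  simp only [pow_mul, Finset.sum_sub_distrib, ← Finset.mul_sum]
  rw [Finset.sum_range_succ' (fun k ↦ (zonal k x : Quaternion ℝ) * c k), zonal_zero_mul, add_zero]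
end
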